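/- Let c = ((2/π)·𝒦(1/√2))²·e^{−π}. For every K > 1, 1 + c·(e^{πK} − e^{π}) < λ(K) < 1 + (1/16)·(e^{πK} − e^{π}). -/

import Mathlib

open Set Filter

/-- Complete elliptic integral of the first kind. -/
noncomputable def ellK (r : ℝ) : ℝ :=
  ∫ θ in (0:ℝ)..(Real.pi / 2), (1 - r ^ 2 * Real.sin θ ^ 2) ^ (-(1/2) : ℝ)

/-- The Grötzsch modulus μ(r) = (π/2)·𝒦'(r)/𝒦(r). -/
noncomputable def mu (r : ℝ) : ℝ :=
  Real.pi / 2 * ellK (Real.sqrt (1 - r ^ 2)) / ellK r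

/-!
Put `t = 1 - r²`. Then `K = 𝒦(r) / 𝒦'(r)` and `λ(K) = (1 - t) / t` are explicit functions of `t`,
and by Legendre's relation `dK/dt` is elementary, so that `dλ / d(exp (π K))` equals
`G(t) = (2𝒦' / π)² · ((1 - t) / t) · exp (-π K)`. The inequalities `2ℰ' < (2 - t) 𝒦'`
and `(π / 2)² ≤ ℰ' 𝒦'` (Cauchy–Schwarz) show that `G` is strictly decreasing on `(0, 1)`. Its value
at `1 / 2` is `c`, and `𝒦 ≥ log (4 / r') - O(r')` gives `G(0+) ≤ 1 / 16`. Since `t = 1 / 2`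
corresponds to `K = 1` and `λ = 1`, Cauchy's mean value theorem yields
`λ(K) - 1 = G(ξ) (exp (π K) - exp π)` with `0 < ξ < 1 / 2`.
-/

open Real MeasureTheory Function Topology

section Integration

variable {a b : ℝ}

theorem hasDerivAt_intervalIntegral_of_continuousOn_prod {E : Type*} [NormedAddCommGroup E]
    [NormedSpace ℝ E] {f f' : ℝ → ℝ → E} {x₀ : ℝ} {U : Set ℝ} (hU : U ∈ 𝓝 x₀)
    (hf : ∀ x ∈ U, ContinuousOn (f x) (uIcc a b))
    (hf' : ContinuousOn (uncurry f') (U ×ˢ uIcc a b))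
    (hderiv : ∀ x ∈ U, ∀ θ ∈ uIcc a b, HasDerivAt (f · θ) (f' x θ) x) :
    HasDerivAt (fun x ↦ ∫ θ in a..b, f x θ) (∫ θ in a..b, f' x₀ θ) x₀ := by
  obtain ⟨ε, hε, hεU⟩ := Metric.nhds_basis_closedBall.mem_iff.1 hU
  obtain ⟨C, hC⟩ := ((isCompact_closedBall x₀ ε).prod isCompact_uIcc).exists_bound_of_continuousOn
    (hf'.mono (prod_mono_left hεU))
  have hf'x₀ : ContinuousOn (f' x₀) (uIcc a b) :=
    hf'.comp (by fun_prop : Continuous fun θ ↦ (x₀, θ)).continuousOn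
      fun θ hθ ↦ ⟨mem_of_mem_nhds hU, hθ⟩
  refine (intervalIntegral.hasDerivAt_integral_of_dominated_loc_of_deriv_le (bound := fun _ ↦ C)
    (Metric.closedBall_mem_nhds x₀ hε) ?_ (hf x₀ (mem_of_mem_nhds hU)).intervalIntegrable
    hf'x₀.intervalIntegrable.def'.aestronglyMeasurable ?_ intervalIntegrable_const ?_).2
  · filter_upwards [hU] with x hx
    exact (hf x hx).intervalIntegrable.def'.aestronglyMeasurable
  · exact .of_forall fun θ hθ x hx ↦ hC (x, θ) ⟨hx, uIoc_subset_uIcc hθ⟩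
  · exact .of_forall fun θ hθ x hx ↦ hderiv x (hεU hx) θ (uIoc_subset_uIcc hθ)

theorem sub_sq_le_integral_mul_integral_inv {f : ℝ → ℝ} (hab : a < b)
    (hf : ContinuousOn f (Icc a b)) (hpos : ∀ x ∈ Icc a b, 0 < f x) :
    (b - a) ^ 2 ≤ (∫ x in a..b, f x) * ∫ x in a..b, (f x)⁻¹ := by
  have hint := hf.intervalIntegrable_of_Icc (μ := volume) hab.le
  have hint_inv : IntervalIntegrable (fun x ↦ (f x)⁻¹) volume a b :=
    (hf.inv₀ fun x hx ↦ (hpos x hx).ne').intervalIntegrable_of_Icc hab.le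
  set I := ∫ x in a..b, (f x)⁻¹
  have hI : 0 < I := intervalIntegral.intervalIntegral_pos_of_pos_on hint_inv
    (fun x hx ↦ inv_pos.2 (hpos x (Ioo_subset_Icc_self hx))) hab
  have quadratic_nonneg (k : ℝ) : 2 * k * (b - a) ≤ (∫ x in a..b, f x) + k ^ 2 * I := by
    calc 2 * k * (b - a) = ∫ _ in a..b, 2 * k := by simp; ring
      _ ≤ ∫ x in a..b, (f x + k ^ 2 * (f x)⁻¹) := by
        refine intervalIntegral.integral_mono_on hab.le intervalIntegrable_const
          (hint.add (hint_inv.const_mul _)) fun x hx ↦ ?_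
        have hfx := hpos x hx
        have hsq : f x + k ^ 2 * (f x)⁻¹ - 2 * k = (f x - k) ^ 2 / f x := by field_simp; ring
        linarith [show 0 ≤ (f x - k) ^ 2 / f x by positivity]
      _ = (∫ x in a..b, f x) + k ^ 2 * I := by
        rw [intervalIntegral.integral_add hint (hint_inv.const_mul _),
          intervalIntegral.integral_const_mul]
  have hopt := quadratic_nonneg ((b - a) / I)
  have hle : (b - a) ^ 2 / I ≤ ∫ x in a..b, f x := by
    have h₁ : 2 * ((b - a) / I) * (b - a) = 2 * ((b - a) ^ 2 / I) := by ring
    have h₂ : ((b - a) / I) ^ 2 * I = (b - a) ^ 2 / I := by field_simp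
    linarith
  rwa [div_le_iff₀ hI] at hle

end Integration

section CompleteIntegrals

variable {m : ℝ}

/-- Legendre's `Δ(θ) = √(1 - m sin² θ)`, in terms of the parameter `m = r ^ 2`. -/
noncomputable def ellDelta (m θ : ℝ) : ℝ := √(1 - m * sin θ ^ 2)

/-- The complete elliptic integral of the first kind as a function of the parameter `m = r ^ 2`
rather than of the modulus `r`, so that passing to the complementary modulus is `m ↦ 1 - m`. -/
noncomputable def paramK (m : ℝ) : ℝ := ∫ θ in (0 : ℝ)..(π / 2), (ellDelta m θ)⁻¹

/-- The complete elliptic integral of the second kind as a function of the parameter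
`m = r ^ 2`. -/
noncomputable def paramE (m : ℝ) : ℝ := ∫ θ in (0 : ℝ)..(π / 2), ellDelta m θ

theorem one_sub_mul_sin_sq_pos (hm : m < 1) (θ : ℝ) : 0 < 1 - m * sin θ ^ 2 := by
  rcases le_or_gt m 0 with hm₀ | hm₀
  · nlinarith [sq_nonneg (sin θ)]
  · nlinarith [sin_sq_le_one θ]

theorem ellDelta_pos (hm : m < 1) (θ : ℝ) : 0 < ellDelta m θ :=
  sqrt_pos.2 (one_sub_mul_sin_sq_pos hm θ)

theorem ellDelta_sq (hm : m < 1) (θ : ℝ) : ellDelta m θ ^ 2 = 1 - m * sin θ ^ 2 :=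
  sq_sqrt (one_sub_mul_sin_sq_pos hm θ).le

theorem ellDelta_pow_four (hm : m < 1) (θ : ℝ) : ellDelta m θ ^ 4 = (1 - m * sin θ ^ 2) ^ 2 := by
  rw [← ellDelta_sq hm]
  ring

theorem ellDelta_le_one (hm : 0 ≤ m) (θ : ℝ) : ellDelta m θ ≤ 1 :=
  sqrt_le_one.2 (by nlinarith [sq_nonneg (sin θ)])

@[fun_prop]
theorem continuous_uncurry_ellDelta : Continuous (uncurry ellDelta) := by
  simp only [Function.uncurry_def, ellDelta]
  fun_prop

@[fun_prop]
theorem continuous_ellDelta (m : ℝ) : Continuous (ellDelta m) := by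
  unfold ellDelta
  fun_prop

theorem continuous_inv_ellDelta (hm : m < 1) : Continuous fun θ ↦ (ellDelta m θ)⁻¹ :=
  (continuous_ellDelta m).inv₀ fun θ ↦ (ellDelta_pos hm θ).ne'

theorem ellK_eq_paramK {r : ℝ} (hr : r ^ 2 < 1) : ellK r = paramK (r ^ 2) := by
  refine intervalIntegral.integral_congr fun θ _ ↦ ?_
  simp only [ellDelta, rpow_neg (one_sub_mul_sin_sq_pos hr θ).le, ← sqrt_eq_rpow]

theorem hasDerivAt_ellDelta_param (hm : m < 1) (θ : ℝ) :
    HasDerivAt (ellDelta · θ) (-sin θ ^ 2 / (2 * ellDelta m θ)) m := by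
  have hradicand : HasDerivAt (fun m ↦ 1 - m * sin θ ^ 2) (-sin θ ^ 2) m := by
    simpa using (hasDerivAt_mul_const (sin θ ^ 2)).const_sub 1
  exact hradicand.sqrt (one_sub_mul_sin_sq_pos hm θ).ne'

theorem hasDerivAt_ellDelta (hm : m < 1) (θ : ℝ) :
    HasDerivAt (ellDelta m) (-(m * sin θ * cos θ) / ellDelta m θ) θ := by
  have hradicand : HasDerivAt (fun θ ↦ 1 - m * sin θ ^ 2) (-(m * (2 * sin θ * cos θ))) θ := by
    simpa using (((hasDerivAt_sin θ).fun_pow 2).const_mul m).const_sub 1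
  refine (hradicand.sqrt (one_sub_mul_sin_sq_pos hm θ).ne').congr_deriv ?_
  rw [← ellDelta]
  have := (ellDelta_pos hm θ).ne'
  field_simp

theorem paramK_zero : paramK 0 = π / 2 := by simp [paramK, ellDelta]

theorem paramK_pos (hm : m < 1) : 0 < paramK m :=
  intervalIntegral.intervalIntegral_pos_of_pos ((continuous_inv_ellDelta hm).intervalIntegrable _ _)
    (fun θ ↦ inv_pos.2 (ellDelta_pos hm θ)) (by positivity)

theorem sqrt_one_sub_mul_paramK_le (h0 : 0 ≤ m) (h1 : m < 1) :
    √(1 - m) * paramK m ≤ π / 2 := by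
  have hint := (continuous_inv_ellDelta h1).intervalIntegrable (μ := volume) 0 (π / 2)
  calc √(1 - m) * paramK m = ∫ θ in (0 : ℝ)..(π / 2), √(1 - m) * (ellDelta m θ)⁻¹ :=
        (intervalIntegral.integral_const_mul ..).symm
    _ ≤ ∫ _ in (0 : ℝ)..(π / 2), 1 := by
        refine intervalIntegral.integral_mono_on (by positivity) (hint.const_mul _)
          intervalIntegrable_const fun θ _ ↦ ?_
        rw [← div_eq_mul_inv, div_le_one (ellDelta_pos h1 θ)]
        exact sqrt_le_sqrt (by nlinarith [sin_sq_le_one θ])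
    _ = π / 2 := by simp

theorem paramK_sub_paramE_eq (hm : m < 1) :
    paramK m - paramE m = m * ∫ θ in (0 : ℝ)..(π / 2), sin θ ^ 2 / ellDelta m θ := by
  rw [paramK, paramE, ← intervalIntegral.integral_sub
    ((continuous_inv_ellDelta hm).intervalIntegrable _ _)
    ((continuous_ellDelta m).intervalIntegrable _ _), ← intervalIntegral.integral_const_mul]
  refine intervalIntegral.integral_congr fun θ _ ↦ ?_
  have := (ellDelta_pos hm θ).ne'
  field_simp
  linarith [ellDelta_sq hm θ]

theorem continuous_paramE : Continuous paramE :=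
  intervalIntegral.continuous_parametric_intervalIntegral_of_continuous'
    continuous_uncurry_ellDelta _ _

theorem paramE_one : paramE 1 = 1 := by
  have hcos : paramE 1 = ∫ θ in (0 : ℝ)..(π / 2), cos θ := by
    refine intervalIntegral.integral_congr fun θ hθ ↦ ?_
    rw [uIcc_of_le (by positivity)] at hθ
    have hcos_nonneg := cos_nonneg_of_mem_Icc ⟨by linarith [hθ.1, pi_pos], hθ.2⟩
    simp only [ellDelta, one_mul, ← cos_sq', sqrt_sq hcos_nonneg]
  simp [hcos]

theorem paramE_le_paramK (h0 : 0 ≤ m) (h1 : m < 1) : paramE m ≤ paramK m :=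
  intervalIntegral.integral_mono_on (by positivity)
    ((continuous_ellDelta m).intervalIntegrable _ _)
    ((continuous_inv_ellDelta h1).intervalIntegrable _ _) fun θ _ ↦
      (ellDelta_le_one h0 θ).trans ((one_le_inv₀ (ellDelta_pos h1 θ)).2 (ellDelta_le_one h0 θ))

theorem one_sub_mul_paramK_le_paramE (h0 : 0 ≤ m) (h1 : m < 1) :
    (1 - m) * paramK m ≤ paramE m := by
  rw [paramK, ← intervalIntegral.integral_const_mul]
  refine intervalIntegral.integral_mono_on (by positivity)
    (((continuous_inv_ellDelta h1).intervalIntegrable _ _).const_mul _)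
    ((continuous_ellDelta m).intervalIntegrable _ _) fun θ _ ↦ ?_
  rw [← div_eq_mul_inv, div_le_iff₀ (ellDelta_pos h1 θ)]
  nlinarith [ellDelta_sq h1 θ, sin_sq_le_one θ]

end CompleteIntegrals

section Derivatives

variable {m t : ℝ}

theorem intervalIntegrable_div_ellDelta_pow_three (hm : m < 1) {f : ℝ → ℝ} (hf : Continuous f)
    (a b : ℝ) : IntervalIntegrable (fun θ ↦ f θ / ellDelta m θ ^ 3) volume a b :=
  (hf.div₀ (by fun_prop) fun θ ↦ (pow_pos (ellDelta_pos hm θ) 3).ne').intervalIntegrable a b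

theorem hasDerivAt_mul_sin_mul_cos_div_ellDelta (hm : m < 1) (θ : ℝ) :
    HasDerivAt (fun θ ↦ m * (sin θ * cos θ / ellDelta m θ))
      (ellDelta m θ - (1 - m) * (1 / ellDelta m θ ^ 3)) θ := by
  have hΔ := (ellDelta_pos hm θ).ne'
  refine ((((hasDerivAt_sin θ).fun_mul (hasDerivAt_cos θ)).fun_div
    (hasDerivAt_ellDelta hm θ) hΔ).const_mul m).congr_deriv ?_
  field_simp
  rw [ellDelta_pow_four hm, ellDelta_sq hm, cos_sq']
  ring

theorem one_sub_mul_integral_inv_ellDelta_pow_three (hm : m < 1) :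
    (1 - m) * ∫ θ in (0 : ℝ)..(π / 2), 1 / ellDelta m θ ^ 3 = paramE m := by
  have hintΔ := (continuous_ellDelta m).intervalIntegrable (μ := volume) 0 (π / 2)
  have hint := (intervalIntegrable_div_ellDelta_pow_three hm
    (f := fun _ ↦ 1) (by fun_prop) 0 (π / 2)).const_mul (1 - m)
  have hFTC := intervalIntegral.integral_eq_sub_of_hasDerivAt
    (fun θ _ ↦ hasDerivAt_mul_sin_mul_cos_div_ellDelta hm θ) (hintΔ.sub hint)
  rw [intervalIntegral.integral_sub hintΔ hint, intervalIntegral.integral_const_mul] at hFTC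
  simp only [sin_zero, cos_pi_div_two, mul_zero, zero_mul, zero_div, sub_zero] at hFTC
  exact (sub_eq_zero.1 hFTC).symm

theorem two_sub_mul_paramK_sub_two_mul_paramE (hm : m < 1) :
    (2 - m) * paramK m - 2 * paramE m =
      m ^ 2 * ∫ θ in (0 : ℝ)..(π / 2), sin θ ^ 2 * cos θ ^ 2 / ellDelta m θ ^ 3 := by
  have hintK := ((continuous_inv_ellDelta hm).intervalIntegrable (μ := volume)
    0 (π / 2)).const_mul (2 - m)
  have hintE := (continuous_ellDelta m).intervalIntegrable (μ := volume) 0 (π / 2)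
  have hint := (intervalIntegrable_div_ellDelta_pow_three hm
    (f := fun _ ↦ 1) (by fun_prop) 0 (π / 2)).const_mul (1 - m)
  rw [two_mul, ← sub_sub]
  nth_rw 2 [← one_sub_mul_integral_inv_ellDelta_pow_three hm]
  simp only [paramK, paramE, ← intervalIntegral.integral_const_mul]
  rw [← intervalIntegral.integral_sub hintK hintE,
    ← intervalIntegral.integral_sub (hintK.sub hintE) hint]
  refine intervalIntegral.integral_congr fun θ _ ↦ ?_
  have := (ellDelta_pos hm θ).ne'
  field_simp
  rw [cos_sq']
  linear_combination (2 - m) * ellDelta_sq hm θ - ellDelta_pow_four hm θ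

theorem two_mul_paramE_lt (h0 : m ≠ 0) (h1 : m < 1) : 2 * paramE m < (2 - m) * paramK m := by
  have hpos : 0 < ∫ θ in (0 : ℝ)..(π / 2), sin θ ^ 2 * cos θ ^ 2 / ellDelta m θ ^ 3 := by
    refine intervalIntegral.intervalIntegral_pos_of_pos_on
      (intervalIntegrable_div_ellDelta_pow_three h1 (by fun_prop) _ _)
      (fun θ hθ ↦ ?_) (by positivity)
    have hsin := sin_pos_of_pos_of_lt_pi hθ.1 (by linarith [hθ.2, pi_pos])
    have hcos := cos_pos_of_mem_Ioo ⟨by linarith [hθ.1, pi_pos], hθ.2⟩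
    have hΔ := ellDelta_pos h1 θ
    positivity
  rw [← sub_pos, two_sub_mul_paramK_sub_two_mul_paramE h1]
  positivity

theorem pi_div_two_sq_le_paramE_mul_paramK (hm : m < 1) :
    (π / 2) ^ 2 ≤ paramE m * paramK m := by
  simpa only [sub_zero, paramE, paramK] using sub_sq_le_integral_mul_integral_inv
    (by positivity : 0 < π / 2) (continuous_ellDelta m).continuousOn fun θ _ ↦ ellDelta_pos hm θ

theorem pi_div_two_sq_lt_paramK_mul (h0 : m ≠ 0) (h1 : m < 1) :
    (π / 2) ^ 2 < paramK m * ((2 - m) * paramK m - paramE m) := by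
  calc (π / 2) ^ 2 ≤ paramE m * paramK m := pi_div_two_sq_le_paramE_mul_paramK h1
    _ = paramK m * paramE m := mul_comm ..
    _ < paramK m * ((2 - m) * paramK m - paramE m) :=
        mul_lt_mul_of_pos_left (by linarith [two_mul_paramE_lt h0 h1]) (paramK_pos h1)

theorem hasDerivAt_paramE (h0 : m ≠ 0) (h1 : m < 1) :
    HasDerivAt paramE ((paramE m - paramK m) / (2 * m)) m := by
  have hderiv : HasDerivAt paramE
      (∫ θ in (0 : ℝ)..(π / 2), -sin θ ^ 2 / (2 * ellDelta m θ)) m := by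
    refine hasDerivAt_intervalIntegral_of_continuousOn_prod (Iio_mem_nhds h1)
      (f' := fun m θ ↦ -sin θ ^ 2 / (2 * ellDelta m θ))
      (fun x _ ↦ (continuous_ellDelta x).continuousOn)
      (ContinuousOn.div (by fun_prop) (continuous_uncurry_ellDelta.const_mul 2).continuousOn
        fun p hp ↦ mul_ne_zero two_ne_zero (ellDelta_pos hp.1 p.2).ne')
      fun x hx θ _ ↦ hasDerivAt_ellDelta_param hx θ
  refine hderiv.congr_deriv ?_
  rw [← neg_sub, paramK_sub_paramE_eq h1, ← intervalIntegral.integral_const_mul,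
    ← intervalIntegral.integral_neg, ← intervalIntegral.integral_div]
  refine intervalIntegral.integral_congr fun θ _ ↦ ?_
  have := (ellDelta_pos h1 θ).ne'
  field_simp

theorem hasDerivAt_paramK_integral (hm : m < 1) :
    HasDerivAt paramK (∫ θ in (0 : ℝ)..(π / 2), sin θ ^ 2 / (2 * ellDelta m θ ^ 3)) m := by
  refine hasDerivAt_intervalIntegral_of_continuousOn_prod (Iio_mem_nhds hm)
    (f' := fun m θ ↦ sin θ ^ 2 / (2 * ellDelta m θ ^ 3))
    (fun x hx ↦ (continuous_inv_ellDelta hx).continuousOn)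
    (ContinuousOn.div (by fun_prop) ((continuous_uncurry_ellDelta.pow 3).const_mul 2).continuousOn
      fun p hp ↦ mul_ne_zero two_ne_zero (pow_pos (ellDelta_pos hp.1 p.2) 3).ne')
    fun x hx θ _ ↦ ?_
  have hΔ := (ellDelta_pos hx θ).ne'
  refine ((hasDerivAt_ellDelta_param hx θ).fun_inv hΔ).congr_deriv ?_
  field_simp

theorem hasDerivAt_paramK (h0 : m ≠ 0) (h1 : m < 1) :
    HasDerivAt paramK ((paramE m - (1 - m) * paramK m) / (2 * m * (1 - m))) m := by
  refine (hasDerivAt_paramK_integral h1).congr_deriv ?_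
  have : 1 - m ≠ 0 := by linarith
  have hsplit : 2 * m * ∫ θ in (0 : ℝ)..(π / 2), sin θ ^ 2 / (2 * ellDelta m θ ^ 3) =
      (∫ θ in (0 : ℝ)..(π / 2), 1 / ellDelta m θ ^ 3) - paramK m := by
    rw [paramK, ← intervalIntegral.integral_sub
      (intervalIntegrable_div_ellDelta_pow_three h1 (f := fun _ ↦ 1) (by fun_prop) _ _)
      ((continuous_inv_ellDelta h1).intervalIntegrable _ _), ← intervalIntegral.integral_const_mul]
    refine intervalIntegral.integral_congr fun θ _ ↦ ?_
    have := (ellDelta_pos h1 θ).ne'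
    field_simp
    linarith [ellDelta_sq h1 θ]
  rw [eq_div_iff (by positivity), ← one_sub_mul_integral_inv_ellDelta_pow_three h1]
  linear_combination (1 - m) * hsplit

theorem hasDerivAt_paramE_one_sub (h0 : 0 < t) (h1 : t ≠ 1) :
    HasDerivAt (fun t ↦ paramE (1 - t))
      ((paramK (1 - t) - paramE (1 - t)) / (2 * (1 - t))) t :=
  ((hasDerivAt_paramE (sub_ne_zero.2 h1.symm) (by linarith)).comp_const_sub 1 t).congr_deriv
    (by ring)

theorem hasDerivAt_paramK_one_sub (h0 : 0 < t) (h1 : t ≠ 1) :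
    HasDerivAt (fun t ↦ paramK (1 - t))
      ((t * paramK (1 - t) - paramE (1 - t)) / (2 * t * (1 - t))) t :=
  ((hasDerivAt_paramK (sub_ne_zero.2 h1.symm) (by linarith)).comp_const_sub 1 t).congr_deriv
    (by rw [sub_sub_cancel]; ring)

end Derivatives

section LegendreRelation

variable {t : ℝ}

/-- The left-hand side `K E' + E K' - K K'` of Legendre's relation, as a function of the
parameter; primes denote the complementary parameter `1 - t`. -/
noncomputable def legendreForm (t : ℝ) : ℝ :=
  paramK t * paramE (1 - t) + paramE t * paramK (1 - t) - paramK t * paramK (1 - t)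

theorem hasDerivAt_legendreForm (h0 : 0 < t) (h1 : t < 1) : HasDerivAt legendreForm 0 t := by
  have hK := hasDerivAt_paramK h0.ne' h1
  have hE := hasDerivAt_paramE h0.ne' h1
  have hK' := hasDerivAt_paramK_one_sub h0 h1.ne
  have hE' := hasDerivAt_paramE_one_sub h0 h1.ne
  refine (((hK.fun_mul hE').fun_add (hE.fun_mul hK')).fun_sub (hK.fun_mul hK')).congr_deriv ?_
  have : 1 - t ≠ 0 := by linarith
  field_simp
  ring

theorem tendsto_paramK_nhdsGT_zero : Tendsto paramK (𝓝[>] 0) (𝓝 (π / 2)) := by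
  have hcont := (hasDerivAt_paramK_integral zero_lt_one).continuousAt
  exact paramK_zero ▸ hcont.tendsto.mono_left nhdsWithin_le_nhds

theorem tendsto_paramE_one_sub_nhdsGT_zero :
    Tendsto (fun t ↦ paramE (1 - t)) (𝓝[>] 0) (𝓝 1) := by
  have hcont : Continuous fun t ↦ paramE (1 - t) := continuous_paramE.comp (by fun_prop)
  simpa only [sub_zero, paramE_one] using (hcont.tendsto 0).mono_left nhdsWithin_le_nhds

theorem paramK_sub_paramE_mul_paramK_one_sub_le (h0 : 0 < t) (h1 : t < 1) :
    (paramK t - paramE t) * paramK (1 - t) ≤ √t * paramK t * (π / 2) := by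
  have hK := paramK_pos h1
  have hK' : √t * paramK (1 - t) ≤ π / 2 := by
    simpa only [sub_sub_cancel] using
      sqrt_one_sub_mul_paramK_le (sub_nonneg.2 h1.le) (sub_lt_self 1 h0)
  calc (paramK t - paramE t) * paramK (1 - t) ≤ t * paramK t * paramK (1 - t) := by
        have := (paramK_pos (sub_lt_self 1 h0)).le
        gcongr
        linarith [one_sub_mul_paramK_le_paramE h0.le h1]
    _ = √t * paramK t * (√t * paramK (1 - t)) := by
        linear_combination -(paramK t * paramK (1 - t)) * mul_self_sqrt h0.le
    _ ≤ √t * paramK t * (π / 2) := by gcongr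

theorem tendsto_paramK_sub_paramE_mul_paramK_one_sub :
    Tendsto (fun t ↦ (paramK t - paramE t) * paramK (1 - t)) (𝓝[>] 0) (𝓝 0) := by
  have hbound : Tendsto (fun t ↦ √t * paramK t * (π / 2)) (𝓝[>] 0) (𝓝 0) := by
    have hsqrt : Tendsto (√·) (𝓝[>] 0) (𝓝 0) := by
      simpa only [sqrt_zero] using (continuous_sqrt.tendsto 0).mono_left nhdsWithin_le_nhds
    simpa only [zero_mul] using (hsqrt.mul tendsto_paramK_nhdsGT_zero).mul_const (π / 2)
  have hmem : ∀ᶠ t in 𝓝[>] (0 : ℝ), t ∈ Ioo (0 : ℝ) 1 := Ioo_mem_nhdsGT one_pos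
  refine squeeze_zero' ?_ ?_ hbound
  · filter_upwards [hmem] with t ⟨h0, h1⟩
    exact mul_nonneg (sub_nonneg.2 (paramE_le_paramK h0.le h1)) (paramK_pos (sub_lt_self 1 h0)).le
  · filter_upwards [hmem] with t ⟨h0, h1⟩
    exact paramK_sub_paramE_mul_paramK_one_sub_le h0 h1

theorem legendre_relation (h0 : 0 < t) (h1 : t < 1) :
    paramK t * paramE (1 - t) + paramE t * paramK (1 - t) - paramK t * paramK (1 - t) = π / 2 := by
  have hlim : Tendsto legendreForm (𝓝[>] 0) (𝓝 (π / 2)) := by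
    have := (tendsto_paramK_nhdsGT_zero.mul tendsto_paramE_one_sub_nhdsGT_zero).sub
      tendsto_paramK_sub_paramE_mul_paramK_one_sub
    simp only [mul_one, sub_zero] at this
    exact this.congr fun t ↦ by rw [legendreForm]; ring
  have hconst : ∀ᶠ x in 𝓝[>] (0 : ℝ), legendreForm x = legendreForm t := by
    filter_upwards [Ioo_mem_nhdsGT one_pos] with x hx
    exact isOpen_Ioo.is_const_of_deriv_eq_zero isPreconnected_Ioo
      (fun y hy ↦ (hasDerivAt_legendreForm hy.1 hy.2).differentiableAt.differentiableWithinAt)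
      (fun y hy ↦ (hasDerivAt_legendreForm hy.1 hy.2).deriv) hx ⟨h0, h1⟩
  exact tendsto_nhds_unique (tendsto_const_nhds.congr' (hconst.mono fun _ h ↦ h.symm)) hlim

end LegendreRelation

section LogarithmicBound

variable {s : ℝ}

theorem log_two_mul_le_arsinh {x : ℝ} (hx : 0 < x) : log (2 * x) ≤ arsinh x := by
  refine log_le_log (by positivity) ?_
  linarith [show x ≤ √(1 + x ^ 2) from le_sqrt_of_sq_le (by linarith)]

theorem integral_sin_div_sqrt_sq_add_cos_sq (hs : 0 < s) :
    ∫ θ in (0 : ℝ)..(π / 2), sin θ / √(s ^ 2 + cos θ ^ 2) = arsinh (1 / s) := by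
  have hsqrt (θ : ℝ) : √(s ^ 2 + cos θ ^ 2) = s * √(1 + (cos θ / s) ^ 2) := by
    rw [← sqrt_sq hs.le, ← sqrt_mul (sq_nonneg s), sqrt_sq hs.le]
    congr 1
    field_simp
  have hderiv (θ : ℝ) :
      HasDerivAt (fun θ ↦ -arsinh (cos θ / s)) (sin θ / √(s ^ 2 + cos θ ^ 2)) θ := by
    refine ((hasDerivAt_cos θ).div_const s).arsinh.fun_neg.congr_deriv ?_
    rw [hsqrt, smul_eq_mul]
    field_simp
  have hcont : Continuous fun θ ↦ sin θ / √(s ^ 2 + cos θ ^ 2) :=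
    continuous_sin.div₀ (by fun_prop) fun θ ↦ (by positivity : 0 < √(s ^ 2 + cos θ ^ 2)).ne'
  rw [intervalIntegral.integral_eq_sub_of_hasDerivAt (fun θ _ ↦ hderiv θ)
    (hcont.intervalIntegrable _ _)]
  simp

theorem sin_nonneg_of_mem_Icc_zero_pi_div_two {θ : ℝ} (hθ : θ ∈ Icc 0 (π / 2)) : 0 ≤ sin θ :=
  sin_nonneg_of_nonneg_of_le_pi hθ.1 (by linarith [hθ.2, pi_pos])

theorem continuousOn_cos_div_one_add_sin :
    ContinuousOn (fun θ ↦ cos θ / (1 + sin θ)) (Icc 0 (π / 2)) :=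
  continuousOn_cos.div (by fun_prop) fun θ hθ ↦
    (by linarith [sin_nonneg_of_mem_Icc_zero_pi_div_two hθ] : 0 < 1 + sin θ).ne'

theorem integral_cos_div_one_add_sin :
    ∫ θ in (0 : ℝ)..(π / 2), cos θ / (1 + sin θ) = log 2 := by
  have hderiv : ∀ θ ∈ uIcc 0 (π / 2),
      HasDerivAt (fun θ ↦ log (1 + sin θ)) (cos θ / (1 + sin θ)) θ := fun θ hθ ↦ by
    rw [uIcc_of_le (by positivity)] at hθ
    exact ((hasDerivAt_sin θ).const_add 1).log
      (by linarith [sin_nonneg_of_mem_Icc_zero_pi_div_two hθ] : 0 < 1 + sin θ).ne'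
  rw [intervalIntegral.integral_eq_sub_of_hasDerivAt hderiv
    (continuousOn_cos_div_one_add_sin.intervalIntegrable_of_Icc (by positivity))]
  norm_num

theorem cos_div_one_add_sin_sub_le (hs : 0 < s) {θ : ℝ} (hsin : 0 ≤ sin θ) (hcos : 0 ≤ cos θ) :
    cos θ / (1 + sin θ) - s ≤ (1 - sin θ) / √(s ^ 2 + cos θ ^ 2) := by
  have hsqrt : √(s ^ 2 + cos θ ^ 2) ≤ cos θ + s :=
    (sqrt_le_left (by positivity)).2 (by nlinarith [mul_nonneg hcos hs.le])
  calc cos θ / (1 + sin θ) - s ≤ (1 - sin θ) / (cos θ + s) := by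
        rw [sub_le_iff_le_add, div_add' _ _ _ (by positivity), div_le_div_iff₀ (by positivity)
          (by positivity)]
        have h₁ : 0 ≤ s * sin θ * cos θ := by positivity
        have h₂ : 0 ≤ s ^ 2 * (1 + sin θ) := by positivity
        linarith [sin_sq_add_cos_sq θ]
    _ ≤ (1 - sin θ) / √(s ^ 2 + cos θ ^ 2) := by
        have := sin_le_one θ
        gcongr

-- The mass near `θ = π / 2` is carried by `sin θ / √(s² + cos² θ)`, which has an elementary
-- primitive; the remaining `(1 - sin θ) / √(s² + cos² θ)` is `cos θ / (1 + sin θ)` up to `O(s)`.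
theorem sin_div_add_cos_div_sub_le_inv_ellDelta (hs : 0 < s) {θ : ℝ} (hθ : θ ∈ Icc 0 (π / 2)) :
    sin θ / √(s ^ 2 + cos θ ^ 2) + cos θ / (1 + sin θ) - s ≤ (ellDelta (1 - s ^ 2) θ)⁻¹ := by
  have hsin := sin_nonneg_of_mem_Icc_zero_pi_div_two hθ
  have hcos := cos_nonneg_of_mem_Icc ⟨by linarith [hθ.1, pi_pos], hθ.2⟩
  calc sin θ / √(s ^ 2 + cos θ ^ 2) + cos θ / (1 + sin θ) - s
      ≤ sin θ / √(s ^ 2 + cos θ ^ 2) + (1 - sin θ) / √(s ^ 2 + cos θ ^ 2) := by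
        linarith [cos_div_one_add_sin_sub_le hs hsin hcos]
    _ = (√(s ^ 2 + cos θ ^ 2))⁻¹ := by ring
    _ ≤ (ellDelta (1 - s ^ 2) θ)⁻¹ := by
        have := ellDelta_pos (sub_lt_self 1 (by positivity : 0 < s ^ 2)) θ
        gcongr
        refine sqrt_le_sqrt ?_
        nlinarith [sin_sq_add_cos_sq θ, mul_nonneg (sq_nonneg s) (sq_nonneg (cos θ))]

theorem log_sub_le_paramK_one_sub_sq (hs : 0 < s) :
    log (4 / s) - π / 2 * s ≤ paramK (1 - s ^ 2) := by
  have hint₁ : IntervalIntegrable (fun θ ↦ sin θ / √(s ^ 2 + cos θ ^ 2)) volume 0 (π / 2) :=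
    (continuous_sin.div₀ (by fun_prop) fun θ ↦
      (by positivity : 0 < √(s ^ 2 + cos θ ^ 2)).ne').intervalIntegrable _ _
  have hint₂ : IntervalIntegrable (fun θ ↦ cos θ / (1 + sin θ)) volume 0 (π / 2) :=
    continuousOn_cos_div_one_add_sin.intervalIntegrable_of_Icc (by positivity)
  calc log (4 / s) - π / 2 * s = log (2 * (1 / s)) + log 2 - π / 2 * s := by
        rw [← log_mul (by positivity) two_ne_zero]
        ring_nf
    _ ≤ arsinh (1 / s) + log 2 - π / 2 * s := by
        gcongr
        exact log_two_mul_le_arsinh (by positivity)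
    _ = ∫ θ in (0 : ℝ)..(π / 2), (sin θ / √(s ^ 2 + cos θ ^ 2) + cos θ / (1 + sin θ) - s) := by
        rw [intervalIntegral.integral_sub (hint₁.add hint₂) intervalIntegrable_const,
          intervalIntegral.integral_add hint₁ hint₂, integral_sin_div_sqrt_sq_add_cos_sq hs,
          integral_cos_div_one_add_sin, intervalIntegral.integral_const, sub_zero, smul_eq_mul]
    _ ≤ paramK (1 - s ^ 2) :=
        intervalIntegral.integral_mono_on (by positivity)
          ((hint₁.add hint₂).sub intervalIntegrable_const)
          ((continuous_inv_ellDelta (sub_lt_self 1 (by positivity))).intervalIntegrable _ _)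
          fun θ hθ ↦ sin_div_add_cos_div_sub_le_inv_ellDelta hs hθ

end LogarithmicBound

section PeriodRatio

variable {t : ℝ}

/-- The ratio `𝒦(r) / 𝒦'(r)`, which is the argument `K` of `λ(K)`, as a function of the
complementary parameter `t = 1 - r ^ 2`. In terms of `t`, `λ(K) = (1 - t) / t`. -/
noncomputable def periodRatio (t : ℝ) : ℝ := paramK (1 - t) / paramK t

theorem periodRatio_pos (h0 : 0 < t) (h1 : t < 1) : 0 < periodRatio t :=
  div_pos (paramK_pos (sub_lt_self 1 h0)) (paramK_pos h1)

theorem periodRatio_one_half : periodRatio (1 / 2) = 1 := by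
  rw [periodRatio, sub_half, div_self (paramK_pos one_half_lt_one).ne']

theorem mu_sqrt_one_sub (h0 : 0 < t) (h1 : t < 1) :
    mu √(1 - t) = π / (2 * periodRatio t) := by
  have hsq : √(1 - t) ^ 2 = 1 - t := sq_sqrt (by linarith)
  have hsq_compl : √t ^ 2 = t := sq_sqrt h0.le
  rw [mu, hsq, sub_sub_cancel, ellK_eq_paramK (by rwa [hsq_compl]),
    ellK_eq_paramK (by rw [hsq]; linarith), hsq, hsq_compl, periodRatio]
  field_simp

theorem hasDerivAt_periodRatio (h0 : 0 < t) (h1 : t < 1) :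
    HasDerivAt periodRatio (-(π / (4 * t * (1 - t) * paramK t ^ 2))) t := by
  have hK := (paramK_pos h1).ne'
  have h1t : 1 - t ≠ 0 := by linarith
  refine ((hasDerivAt_paramK_one_sub h0 h1.ne).fun_div
    (hasDerivAt_paramK h0.ne' h1) hK).congr_deriv ?_
  field_simp
  linear_combination -4 * legendre_relation h0 h1

theorem le_pi_mul_periodRatio (h0 : 0 < t) (h1 : t < 1) :
    log (16 / t) - t * log (16 / t) - π * √t ≤ π * periodRatio t := by
  have hK := paramK_pos h1
  have hK' := paramK_pos (sub_lt_self 1 h0)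
  have hlog : log (16 / t) = 2 * log (4 / √t) := by
    rw [← log_rpow (by positivity)]
    norm_num [div_pow, sq_sqrt h0.le]
  have hlower : log (16 / t) - π * √t ≤ 2 * paramK (1 - t) := by
    have := log_sub_le_paramK_one_sub_sq (sqrt_pos.2 h0)
    rw [sq_sqrt h0.le] at this
    linarith
  have hupper : (1 - t) * paramK t ≤ π / 2 := by
    have hle_sqrt : 1 - t ≤ √(1 - t) := le_sqrt_of_sq_le (by nlinarith)
    exact (mul_le_mul_of_nonneg_right hle_sqrt hK.le).trans (sqrt_one_sub_mul_paramK_le h0.le h1)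
  calc log (16 / t) - t * log (16 / t) - π * √t
      ≤ (1 - t) * (log (16 / t) - π * √t) := by
        linarith [show 0 ≤ t * (π * √t) by positivity]
    _ ≤ (1 - t) * (2 * paramK (1 - t)) := by gcongr
    _ ≤ π * periodRatio t := by
        rw [periodRatio, ← mul_div_assoc, le_div_iff₀ hK]
        nlinarith

theorem tendsto_mul_log_add_sqrt_nhdsGT_zero :
    Tendsto (fun t ↦ t * log (16 / t) + π * √t) (𝓝[>] 0) (𝓝 0) := by
  have hcont : Continuous fun t ↦ t * log 16 - t * log t + π * √t :=
    ((continuous_mul_const _).sub continuous_mul_log).add (by fun_prop)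
  have hlim := (hcont.tendsto 0).mono_left (nhdsWithin_le_nhds (s := Ioi 0))
  simp only [zero_mul, sub_zero, sqrt_zero, mul_zero, add_zero] at hlim
  refine hlim.congr' ?_
  filter_upwards [self_mem_nhdsWithin] with t (ht : 0 < t)
  rw [log_div (by norm_num) ht.ne', mul_sub]

theorem tendsto_periodRatio_nhdsGT_zero : Tendsto periodRatio (𝓝[>] 0) atTop := by
  have hlog : Tendsto (fun t : ℝ ↦ log (16 / t)) (𝓝[>] 0) atTop :=
    tendsto_log_atTop.comp (tendsto_inv_nhdsGT_zero.const_mul_atTop (by norm_num : (0 : ℝ) < 16))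
  refine (tendsto_const_mul_atTop_of_pos pi_pos).1 (tendsto_atTop_mono' _ ?_
    (hlog.atTop_add tendsto_mul_log_add_sqrt_nhdsGT_zero.neg))
  filter_upwards [Ioo_mem_nhdsGT one_pos] with t ht
  linarith [le_pi_mul_periodRatio ht.1 ht.2]

theorem exists_periodRatio_eq {K : ℝ} (hK : 1 < K) : ∃ t ∈ Ioo 0 (1 / 2), periodRatio t = K := by
  have hmem : ∀ᶠ s in 𝓝[>] (0 : ℝ), s ∈ Ioo (0 : ℝ) (1 / 2) := Ioo_mem_nhdsGT one_half_pos
  obtain ⟨s, hs, hKs⟩ :=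
    (hmem.and (tendsto_periodRatio_nhdsGT_zero.eventually_gt_atTop K)).exists
  have hcont : ContinuousOn periodRatio (Icc s (1 / 2)) := fun x hx ↦
    (hasDerivAt_periodRatio (hs.1.trans_le hx.1)
      (hx.2.trans_lt one_half_lt_one)).continuousAt.continuousWithinAt
  obtain ⟨t, ht, rfl⟩ :=
    intermediate_value_Ioo' hs.2.le hcont ⟨periodRatio_one_half.trans_lt hK, hKs⟩
  exact ⟨t, ⟨hs.1.trans ht.1, ht.2⟩, rfl⟩

end PeriodRatio

section LambdaSlope

variable {s t : ℝ}

/-- The derivative of `λ(K)` with respect to `exp (π K)`, as a function of the complementary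
parameter `t = 1 - r ^ 2` of the modulus `r` that defines `λ(K)`. -/
noncomputable def lambdaSlope (t : ℝ) : ℝ :=
  (2 / π * paramK t) ^ 2 * ((1 - t) / t) * exp (-(π * periodRatio t))

theorem lambdaSlope_pos (h0 : 0 < t) (h1 : t < 1) : 0 < lambdaSlope t := by
  have hK := paramK_pos h1
  have : 0 < 1 - t := sub_pos.2 h1
  unfold lambdaSlope
  positivity

theorem lambdaSlope_one_half :
    lambdaSlope (1 / 2) = (2 / π * ellK (1 / √2)) ^ 2 * exp (-π) := by
  have hsq : (1 / √2) ^ 2 = (1 / 2 : ℝ) := by rw [div_pow, one_pow, sq_sqrt zero_le_two]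
  rw [lambdaSlope, periodRatio_one_half, ellK_eq_paramK (by rw [hsq]; norm_num), hsq]
  norm_num

theorem hasDerivAt_one_sub_div_self (h0 : t ≠ 0) :
    HasDerivAt (fun t ↦ (1 - t) / t) (-1 / t ^ 2) t := by
  refine (((hasDerivAt_id' t).const_sub 1).fun_div (hasDerivAt_id' t) h0).congr_deriv ?_
  ring

theorem hasDerivAt_lambdaSlope (h0 : 0 < t) (h1 : t < 1) :
    HasDerivAt lambdaSlope (lambdaSlope t *
      (((π / 2) ^ 2 - paramK t * ((2 - t) * paramK t - paramE t)) /
        (paramK t ^ 2 * t * (1 - t)))) t := by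
  have hK := (paramK_pos h1).ne'
  have h1t : 1 - t ≠ 0 := by linarith
  refine (((((hasDerivAt_paramK h0.ne' h1).const_mul (2 / π)).fun_pow 2).fun_mul
    (hasDerivAt_one_sub_div_self h0.ne')).fun_mul
    ((hasDerivAt_periodRatio h0 h1).const_mul π).fun_neg.exp).congr_deriv ?_
  simp only [lambdaSlope, Nat.cast_ofNat, show 2 - 1 = 1 from rfl, pow_one]
  generalize exp (-(π * periodRatio t)) = X
  have := pi_ne_zero
  field_simp
  ring

theorem strictAntiOn_lambdaSlope : StrictAntiOn lambdaSlope (Ioo 0 1) := by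
  refine strictAntiOn_of_deriv_neg (convex_Ioo 0 1)
    (fun t ht ↦ (hasDerivAt_lambdaSlope ht.1 ht.2).continuousAt.continuousWithinAt)
    fun t ht ↦ ?_
  obtain ⟨h0, h1⟩ := interior_subset ht
  have hden : 0 < paramK t ^ 2 * t * (1 - t) :=
    mul_pos (mul_pos (pow_pos (paramK_pos h1) 2) h0) (sub_pos.2 h1)
  rw [(hasDerivAt_lambdaSlope h0 h1).deriv]
  exact mul_neg_of_pos_of_neg (lambdaSlope_pos h0 h1)
    (div_neg_of_neg_of_pos (sub_neg.2 (pi_div_two_sq_lt_paramK_mul h0.ne' h1)) hden)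

theorem lambdaSlope_le (h0 : 0 < t) (h1 : t < 1) :
    lambdaSlope t ≤ 1 / 16 * exp (t * log (16 / t) + π * √t) := by
  have h1t : 0 ≤ 1 - t := sub_nonneg.2 h1.le
  have hK := paramK_pos h1
  have hprefactor : (2 / π * paramK t) ^ 2 * (1 - t) ≤ 1 := by
    have hle_one : 2 / π * (√(1 - t) * paramK t) ≤ 1 := by
      rw [div_mul_eq_mul_div, div_le_one pi_pos]
      linarith [sqrt_one_sub_mul_paramK_le h0.le h1]
    calc (2 / π * paramK t) ^ 2 * (1 - t) = (2 / π * (√(1 - t) * paramK t)) ^ 2 := by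
          rw [mul_pow, mul_pow, mul_pow, sq_sqrt h1t]
          ring
      _ ≤ 1 := pow_le_one₀ (by positivity) hle_one
  calc lambdaSlope t = (2 / π * paramK t) ^ 2 * (1 - t) * (1 / t * exp (-(π * periodRatio t))) := by
        rw [lambdaSlope]
        ring
    _ ≤ 1 * (1 / t * exp (-log (16 / t) + (t * log (16 / t) + π * √t))) := by
        gcongr
        linarith [le_pi_mul_periodRatio h0 h1]
    _ = 1 / 16 * exp (t * log (16 / t) + π * √t) := by
        rw [exp_add, exp_neg, exp_log (by positivity)]
        field_simp

theorem lambdaSlope_lt_one_div_sixteen (h0 : 0 < t) (h1 : t < 1) : lambdaSlope t < 1 / 16 := by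
  have hlim :
      Tendsto (fun x ↦ 1 / 16 * exp (x * log (16 / x) + π * √x)) (𝓝[>] 0) (𝓝 (1 / 16)) := by
    have := (continuous_exp.tendsto 0).comp tendsto_mul_log_add_sqrt_nhdsGT_zero
    simpa only [exp_zero, mul_one, comp_apply] using this.const_mul (1 / 16)
  have hhalf : t / 2 ∈ Ioo (0 : ℝ) 1 := ⟨by linarith, by linarith⟩
  calc lambdaSlope t < lambdaSlope (t / 2) := strictAntiOn_lambdaSlope hhalf ⟨h0, h1⟩ (by linarith)
    _ ≤ 1 / 16 := by
        refine ge_of_tendsto hlim ?_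
        filter_upwards [Ioo_mem_nhdsGT hhalf.1] with x hx
        have hx1 := hx.2.trans hhalf.2
        exact (strictAntiOn_lambdaSlope ⟨hx.1, hx1⟩ hhalf hx.2).le.trans (lambdaSlope_le hx.1 hx1)

theorem hasDerivAt_exp_pi_mul_periodRatio (h0 : 0 < t) (h1 : t < 1) :
    HasDerivAt (fun t ↦ exp (π * periodRatio t))
      (-(π ^ 2 * exp (π * periodRatio t) / (4 * t * (1 - t) * paramK t ^ 2))) t :=
  ((hasDerivAt_periodRatio h0 h1).const_mul π).exp.congr_deriv (by ring)

theorem hasDerivAt_one_sub_div_self_lambdaSlope_mul (h0 : 0 < t) (h1 : t < 1) :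
    HasDerivAt (fun t ↦ (1 - t) / t) (lambdaSlope t *
      -(π ^ 2 * exp (π * periodRatio t) / (4 * t * (1 - t) * paramK t ^ 2))) t := by
  refine (hasDerivAt_one_sub_div_self h0.ne').congr_deriv ?_
  have hK := (paramK_pos h1).ne'
  have : 1 - t ≠ 0 := by linarith
  rw [lambdaSlope, exp_neg]
  field_simp
  norm_num

theorem exists_sub_eq_lambdaSlope_mul (h0 : 0 < s) (hst : s < t) (h1 : t < 1) :
    ∃ ξ ∈ Ioo s t, (1 - s) / s - (1 - t) / t =
      lambdaSlope ξ * (exp (π * periodRatio s) - exp (π * periodRatio t)) := by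
  have hmem : ∀ x ∈ Icc s t, 0 < x ∧ x < 1 := fun x hx ↦ ⟨h0.trans_le hx.1, hx.2.trans_lt h1⟩
  have hderiv_lambda := fun x (hx : x ∈ Icc s t) ↦
    hasDerivAt_one_sub_div_self_lambdaSlope_mul (hmem x hx).1 (hmem x hx).2
  have hderiv_exp := fun x (hx : x ∈ Icc s t) ↦
    hasDerivAt_exp_pi_mul_periodRatio (hmem x hx).1 (hmem x hx).2
  obtain ⟨ξ, hξ, hcauchy⟩ := exists_ratio_hasDerivAt_eq_ratio_slope _ _ hst
    (fun x hx ↦ (hderiv_lambda x hx).continuousAt.continuousWithinAt)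
    (fun x hx ↦ hderiv_lambda x (Ioo_subset_Icc_self hx)) _ _
    (fun x hx ↦ (hderiv_exp x hx).continuousAt.continuousWithinAt)
    (fun x hx ↦ hderiv_exp x (Ioo_subset_Icc_self hx))
  obtain ⟨hξ0, hξ1⟩ := hmem ξ (Ioo_subset_Icc_self hξ)
  have hderiv_exp_ne_zero :
      -(π ^ 2 * exp (π * periodRatio ξ) / (4 * ξ * (1 - ξ) * paramK ξ ^ 2)) ≠ 0 := by
    have := paramK_pos hξ1
    have : 0 < 1 - ξ := sub_pos.2 hξ1
    exact neg_ne_zero.2 (by positivity)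
  refine ⟨ξ, hξ, mul_right_cancel₀ hderiv_exp_ne_zero ?_⟩
  linear_combination hcauchy

end LambdaSlope

theorem stmt_13 (lam : ℝ → ℝ)
    (hlam : ∀ K : ℝ, 0 < K → ∀ r ∈ Set.Ioo (0:ℝ) 1,
      mu r = Real.pi / (2 * K) → lam K = r ^ 2 / (1 - r ^ 2)) (c : ℝ)
    (hc : c = (2 / Real.pi * ellK (1 / Real.sqrt 2)) ^ 2 * Real.exp (-Real.pi)) :
    ∀ K : ℝ, 1 < K →
      1 + c * (Real.exp (Real.pi * K) - Real.exp Real.pi) < lam K ∧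
      lam K < 1 + 1 / 16 * (Real.exp (Real.pi * K) - Real.exp Real.pi) := by
  intro K hK
  obtain ⟨t, ⟨h0, hhalf⟩, rfl⟩ := exists_periodRatio_eq hK
  have h1 : t < 1 := hhalf.trans one_half_lt_one
  have hlam_eq : lam (periodRatio t) = (1 - t) / t := by
    have hr : √(1 - t) ∈ Ioo 0 1 :=
      ⟨sqrt_pos.2 (by linarith), (sqrt_lt' one_pos).2 (by linarith)⟩
    rw [hlam _ (periodRatio_pos h0 h1) _ hr (mu_sqrt_one_sub h0 h1), sq_sqrt (by linarith),
      sub_sub_cancel]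
  obtain ⟨ξ, ⟨hξ, hξ_half⟩, hslope⟩ := exists_sub_eq_lambdaSlope_mul h0 hhalf one_half_lt_one
  rw [periodRatio_one_half, mul_one, ← hlam_eq] at hslope
  have hlower : c < lambdaSlope ξ := by
    rw [hc, ← lambdaSlope_one_half]
    exact strictAntiOn_lambdaSlope ⟨h0.trans hξ, hξ_half.trans one_half_lt_one⟩
      ⟨one_half_pos, one_half_lt_one⟩ hξ_half
  have hupper : lambdaSlope ξ < 1 / 16 :=
    lambdaSlope_lt_one_div_sixteen (h0.trans hξ) (hξ_half.trans one_half_lt_one)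
  have hexp : 0 < exp (π * periodRatio t) - exp π :=
    sub_pos.2 (exp_lt_exp.2 (lt_mul_of_one_lt_right pi_pos hK))
  constructor
  · linarith [mul_lt_mul_of_pos_right hlower hexp]
  · linarith [mul_lt_mul_of_pos_right hupper hexp]
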